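/- The exceptional Lie algebra e₆(ℂ) of type E₆ over ℂ has dimension 78 as a complex vector space; equivalently, the adjoint representation of e₆(ℂ) is 78-dimensional. -/

import Mathlib

/-
Let `A` be a Cartan matrix of type `ADE`. In its Lie algebra, the Serre relations make the iterated
brackets of the `e i` that climb through the positive roots, one simple root at a time, unique up to
a scalar for each positive root; hence these brackets, the corresponding brackets of the `f i` and
the `h i` together span. Conversely, these vectors are joint eigenvectors of the `h i` with distinct
nonzero weights, and `sl₂`-theory shows that none of them vanishes once `e i ≠ 0` for all `i`. The
latter is visible in Lusztig's model of the adjoint representation, whose structure constants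
involve no signs. So the dimension is the rank plus twice the number of positive roots, which for
`E₆` is `6 + 2 * 36`.
-/

open Matrix

section RootCombinatorics

variable {ι : Type*}

/-- Cartan matrices of type `ADE`, not necessarily irreducible: the simply laced Cartan matrices
of finite type. -/
structure IsADE (A : Matrix ι ι ℤ) : Prop where
  diag : ∀ i, A i i = 2
  isSimplyLaced : A.IsSimplyLaced
  posDef : A.PosDef

namespace IsADE

variable {A : Matrix ι ι ℤ}

theorem isSymm (hA : IsADE A) : A.IsSymm :=
  isHermitian_iff_isSymm.1 hA.posDef.isHermitian

theorem apply_comm (hA : IsADE A) (i j : ι) : A i j = A j i :=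
  hA.isSymm.apply j i

theorem apply_nonpos (hA : IsADE A) {i j : ι} (hij : i ≠ j) : A i j ≤ 0 := by
  rcases hA.isSimplyLaced hij with h | h <;> omega

end IsADE

variable [Fintype ι]

/-- The roots of a Cartan matrix `A` of type `ADE`, in coordinates with respect to the simple
roots: as all roots have the same length, they are the vectors of norm `2` of the root lattice. -/
def IsRoot (A : Matrix ι ι ℤ) (β : ι → ℤ) : Prop :=
  β ⬝ᵥ A *ᵥ β = 2

/-- The positive roots of a Cartan matrix `A` of type `ADE`. -/
def posRoots (A : Matrix ι ι ℤ) : Set (ι → ℤ) :=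
  {β | 0 ≤ β ∧ IsRoot A β}

variable {A : Matrix ι ι ℤ} {β γ : ι → ℤ} {i j : ι}

namespace IsADE

theorem dotProduct_mulVec_nonneg (hA : IsADE A) (x : ι → ℤ) : 0 ≤ x ⬝ᵥ A *ᵥ x := by
  simpa using hA.posDef.posSemidef.dotProduct_mulVec_nonneg x

theorem eq_zero_of_dotProduct_mulVec_nonpos (hA : IsADE A) {x : ι → ℤ}
    (hx : x ⬝ᵥ A *ᵥ x ≤ 0) : x = 0 := by
  by_contra h0
  exact hx.not_gt (by simpa using hA.posDef.dotProduct_mulVec_pos h0)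

theorem mulVec_injective (hA : IsADE A) : Function.Injective (A *ᵥ ·) := fun x y hxy ↦ by
  have hsub : A *ᵥ (x - y) = 0 := by rw [mulVec_sub, sub_eq_zero.2 hxy]
  exact sub_eq_zero.1 (hA.eq_zero_of_dotProduct_mulVec_nonpos (by rw [hsub, dotProduct_zero]))

theorem apply_pos_of_mulVec_pos (hA : IsADE A) (hβ : 0 ≤ β) (hi : 0 < (A *ᵥ β) i) :
    0 < β i := by
  refine (hβ i).lt_of_ne fun h0 ↦ hi.not_ge (Finset.sum_nonpos fun j _ ↦ ?_)
  by_cases hij : i = j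
  · simp [← hij, ← h0]
  · exact mul_nonpos_of_nonpos_of_nonneg (hA.apply_nonpos hij) (hβ j)

end IsADE

theorem IsRoot.neg (hβ : IsRoot A β) : IsRoot A (-β) := by
  simpa [IsRoot, mulVec_neg] using hβ

theorem IsRoot.ne_zero (hβ : IsRoot A β) : β ≠ 0 := by
  rintro rfl
  simp [IsRoot] at hβ

theorem sum_pos_of_mem_posRoots (hβ : β ∈ posRoots A) : 0 < ∑ i, β i :=
  Fintype.sum_pos (hβ.1.lt_of_ne hβ.2.ne_zero.symm)

theorem neg_notMem_posRoots (hβ : β ∈ posRoots A) : -β ∉ posRoots A := fun hβ' ↦ by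
  have h1 := sum_pos_of_mem_posRoots hβ
  have h2 := sum_pos_of_mem_posRoots hβ'
  simp only [Pi.neg_apply, Finset.sum_neg_distrib] at h2
  omega

theorem exists_mulVec_pos_of_mem_posRoots (hβ : β ∈ posRoots A) : ∃ i, 0 < (A *ᵥ β) i := by
  by_contra! hneg
  have : β ⬝ᵥ A *ᵥ β ≤ 0 :=
    Finset.sum_nonpos fun i _ ↦ mul_nonpos_of_nonneg_of_nonpos (hβ.1 i) (hneg i)
  rw [hβ.2] at this
  omega

theorem IsADE.injective_mulVec_sumElim (hA : IsADE A) :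
    Function.Injective (Sum.elim (fun β : posRoots A ↦ A *ᵥ β) fun β : posRoots A ↦ -(A *ᵥ β)) := by
  refine (hA.mulVec_injective.comp Subtype.val_injective).sumElim
    (neg_injective.comp (hA.mulVec_injective.comp Subtype.val_injective)) fun β γ hβγ ↦ ?_
  rw [← mulVec_neg] at hβγ
  exact neg_notMem_posRoots γ.2 (hA.mulVec_injective hβγ ▸ β.2)

variable [DecidableEq ι]

theorem mulVec_add_single (A : Matrix ι ι ℤ) (β : ι → ℤ) (i j : ι) :
    (A *ᵥ (β + Pi.single i 1)) j = (A *ᵥ β) j + A j i := by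
  simp [mulVec_add]

theorem sum_add_single (β : ι → ℤ) (i : ι) :
    ∑ j, (β + Pi.single i 1 : ι → ℤ) j = ∑ j, β j + 1 := by
  simp [Finset.sum_add_distrib]

namespace IsADE

theorem det_ne_zero (hA : IsADE A) : A.det ≠ 0 := fun h0 ↦ by
  obtain ⟨x, hx, hAx⟩ := exists_mulVec_eq_zero_iff.2 h0
  exact hx (hA.eq_zero_of_dotProduct_mulVec_nonpos (by simp [hAx]))

theorem dotProduct_mulVec_add_single (hA : IsADE A) (β : ι → ℤ) (c : ℤ) (i : ι) :
    (β + Pi.single i c) ⬝ᵥ A *ᵥ (β + Pi.single i c) =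
      β ⬝ᵥ A *ᵥ β + 2 * c * ((A *ᵥ β) i + c) := by
  have hβi : β ⬝ᵥ A *ᵥ Pi.single i c = c * (A *ᵥ β) i := by
    rw [dotProduct_mulVec, ← mulVec_transpose, hA.isSymm.eq, dotProduct_single, mul_comm]
  have hii : (A *ᵥ Pi.single i c) i = 2 * c := by simp [hA.diag, mul_comm]
  rw [mulVec_add, dotProduct_add, add_dotProduct, add_dotProduct, hβi, single_dotProduct,
    single_dotProduct, hii]
  ring

/-- The Cauchy–Schwarz inequality for `β` and the `i`-th column of the adjugate, which is
`A.det` times the `i`-th fundamental coweight. -/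
theorem det_mul_apply_sq_le (hA : IsADE A) (β : ι → ℤ) (i : ι) :
    (A.det * β i) ^ 2 ≤ A.det * A.adjugate i i * (β ⬝ᵥ A *ᵥ β) := by
  set u : ι → ℤ := A.adjugate.col i
  have hu : A *ᵥ u = Pi.single i A.det := by
    ext j
    simpa [mul_apply, mulVec, dotProduct, u, one_apply, Pi.single_apply] using
      congrFun₂ A.mul_adjugate j i
  have huβ : u ⬝ᵥ A *ᵥ β = A.det * β i := by
    rw [dotProduct_mulVec, ← mulVec_transpose, hA.isSymm.eq, hu]
    simp
  have huu : u ⬝ᵥ A *ᵥ u = A.det * A.adjugate i i := by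
    rw [hu, dotProduct_single, mul_comm]
    rfl
  simpa [toBilin'_apply', huβ, huu] using
    (toBilin' A).apply_sq_le_of_symm (fun x ↦ by
      simpa [toBilin'_apply'] using hA.dotProduct_mulVec_nonneg x)
      ⟨(isSymm_toBilin'_iff_isSymm.2 hA.isSymm).eq⟩ u β

theorem isRoot_single (hA : IsADE A) (s : ℤˣ) (i : ι) : IsRoot A (Pi.single i (s : ℤ)) := by
  rw [IsRoot, single_dotProduct, mulVec_single, Pi.smul_apply, op_smul_eq_mul, col_apply, hA.diag,
    mul_left_comm, Int.units_coe_mul_self, mul_one]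

theorem single_mem_posRoots (hA : IsADE A) (i : ι) : Pi.single i 1 ∈ posRoots A :=
  ⟨by simp, hA.isRoot_single 1 i⟩

omit [DecidableEq ι] in
theorem finite_setOf_isRoot (hA : IsADE A) : {β | IsRoot A β}.Finite := by
  classical
  let b (i : ι) : ℤ := A.det * A.adjugate i i * 2
  refine (Set.finite_Icc (-b) b).subset fun β hβ ↦ ?_
  have hb (i : ι) : |β i| ≤ b i := calc
    |β i| ≤ |A.det * β i| := by
      rw [abs_mul]
      exact le_mul_of_one_le_left (abs_nonneg _) (Int.one_le_abs hA.det_ne_zero)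
    _ ≤ (A.det * β i) ^ 2 := by
      simpa only [Int.natCast_natAbs] using Int.natAbs_le_self_sq (A.det * β i)
    _ ≤ b i := (hA.det_mul_apply_sq_le β i).trans_eq (by rw [show β ⬝ᵥ A *ᵥ β = 2 from hβ])
  exact ⟨fun i ↦ (abs_le.1 (hb i)).1, fun i ↦ (abs_le.1 (hb i)).2⟩

omit [DecidableEq ι] in
theorem finite_posRoots (hA : IsADE A) : (posRoots A).Finite :=
  hA.finite_setOf_isRoot.subset fun _ hβ ↦ hβ.2

end IsADE

namespace IsRoot

theorem add_single_iff (hA : IsADE A) (hβ : IsRoot A β) (s : ℤˣ) :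
    IsRoot A (β + Pi.single i (s : ℤ)) ↔ s * (A *ᵥ β) i = -1 := by
  rw [IsRoot] at hβ
  rw [IsRoot, hA.dotProduct_mulVec_add_single, hβ, mul_assoc, mul_add, Int.units_coe_mul_self]
  omega

theorem eq_neg_single (hA : IsADE A) (hβ : IsRoot A β) (s : ℤˣ) (hi : s * (A *ᵥ β) i ≤ -2) :
    β = -Pi.single i (s : ℤ) := by
  rw [IsRoot] at hβ
  refine eq_neg_of_add_eq_zero_left (hA.eq_zero_of_dotProduct_mulVec_nonpos ?_)
  rw [hA.dotProduct_mulVec_add_single, hβ, mul_assoc, mul_add, Int.units_coe_mul_self]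
  omega

theorem eq_single (hA : IsADE A) (hβ : IsRoot A β) (hi : 2 ≤ (A *ᵥ β) i) :
    β = Pi.single i 1 := by
  simpa [← Pi.single_neg] using hβ.eq_neg_single hA (-1) (i := i) (by simpa using hi)

end IsRoot

namespace IsADE

omit [DecidableEq ι] in
theorem neg_one_le_mulVec (hA : IsADE A) (hβ : β ∈ posRoots A) (i : ι) :
    -1 ≤ (A *ᵥ β) i := by
  classical
  by_contra! hi
  refine neg_notMem_posRoots (hA.single_mem_posRoots i) ?_
  have := hβ.2.eq_neg_single hA 1 (i := i) (by rw [Units.val_one, one_mul]; omega)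
  rwa [this] at hβ

theorem add_single_mem_posRoots (hA : IsADE A) (hβ : β ∈ posRoots A)
    (hi : (A *ᵥ β) i = -1) : β + Pi.single i 1 ∈ posRoots A :=
  ⟨add_nonneg hβ.1 (by simp), (hβ.2.add_single_iff hA 1).2 (by simpa using hi)⟩

theorem exists_eq_add_single (hA : IsADE A) (hβ : β ∈ posRoots A) (hi : (A *ᵥ β) i = 1) :
    ∃ γ ∈ posRoots A, (A *ᵥ γ) i = -1 ∧ β = γ + Pi.single i 1 := by
  refine ⟨β - Pi.single i 1, ⟨fun j ↦ ?_, ?_⟩, ?_, by simp⟩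
  · have hβi := hA.apply_pos_of_mulVec_pos hβ.1 (hi ▸ one_pos)
    have hβj := hβ.1 j
    by_cases hij : j = i
    · subst hij
      simpa using Int.add_one_le_of_lt hβi
    · simpa [hij] using hβj
  · simpa [sub_eq_add_neg, ← Pi.single_neg] using
      (hβ.2.add_single_iff hA (i := i) (-1)).2 (by simpa using hi)
  · simp [mulVec_sub, hi, hA.diag]

theorem posRoots_induction (hA : IsADE A) {P : (ι → ℤ) → Prop}
    (single : ∀ i, P (Pi.single i 1))
    (add_single : ∀ β ∈ posRoots A, ∀ i, (A *ᵥ β) i = -1 → P β → P (β + Pi.single i 1))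
    (hβ : β ∈ posRoots A) : P β := by
  obtain ⟨n, hn⟩ := Int.eq_ofNat_of_zero_le (sum_pos_of_mem_posRoots hβ).le
  induction n generalizing β with
  | zero => exact absurd hn (sum_pos_of_mem_posRoots hβ).ne'
  | succ n ih =>
    obtain ⟨i, hi⟩ := exists_mulVec_pos_of_mem_posRoots hβ
    rcases (show 1 ≤ (A *ᵥ β) i from hi).eq_or_lt' with h1 | h2
    · obtain ⟨γ, hγ, hγi, rfl⟩ := hA.exists_eq_add_single hβ h1
      rw [sum_add_single] at hn
      exact add_single γ hγ i hγi (ih hγ (by push_cast at hn; omega))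
    · rw [hβ.2.eq_single hA h2]
      exact single i

theorem eq_of_add_single_eq (hA : IsADE A) (hβ : β ∈ posRoots A) (hγ : γ ∈ posRoots A)
    (hij : i ≠ j) (hi : (A *ᵥ β) i = -1) (hj : (A *ᵥ γ) j = -1)
    (h : β + Pi.single i 1 = γ + Pi.single j 1) :
    (A i j = 0 ∧ ∃ δ ∈ posRoots A, (A *ᵥ δ) i = -1 ∧ (A *ᵥ δ) j = -1 ∧
      β = δ + Pi.single j 1 ∧ γ = δ + Pi.single i 1) ∨
    (β = Pi.single j 1 ∧ γ = Pi.single i 1) := by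
  have hγi := mulVec_add_single A β i i
  rw [h, mulVec_add_single, hi, hA.diag] at hγi
  have hβj := mulVec_add_single A γ j j
  rw [← h, mulVec_add_single, hj, hA.diag, hA.apply_comm] at hβj
  rcases hA.isSimplyLaced hij with hAij | hAij
  · obtain ⟨δ, hδ, hδj, rfl⟩ := hA.exists_eq_add_single hβ (i := j) (by omega)
    rw [mulVec_add_single] at hi
    rw [add_right_comm] at h
    exact .inl ⟨hAij, δ, hδ, by omega, hδj, rfl, (add_right_cancel h).symm⟩
  · exact .inr ⟨hβ.2.eq_single hA (by omega), hγ.2.eq_single hA (by omega)⟩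

end IsADE

end RootCombinatorics

section LieIdentities

theorem lieHom_ad_pow_apply {R L L' : Type*} [CommRing R] [LieRing L] [LieAlgebra R L]
    [LieRing L'] [LieAlgebra R L'] (φ : L →ₗ⁅R⁆ L') (x y : L) (n : ℕ) :
    φ ((LieAlgebra.ad R L x ^ n) y) = (LieAlgebra.ad R L' (φ x) ^ n) (φ y) := by
  induction n with
  | zero => rfl
  | succ n ih => simp [pow_succ', ih]

variable {L : Type*} [LieRing L] {a b : L}

theorem lie_lie_comm_of_lie_eq_zero (hab : ⁅a, b⁆ = 0) (x : L) : ⁅a, ⁅b, x⁆⁆ = ⁅b, ⁅a, x⁆⁆ := by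
  rw [leibniz_lie, hab, zero_lie, zero_add]

theorem lie_lie_lie_of_lie_lie_eq_zero (hab : ⁅a, ⁅a, b⁆⁆ = 0) (x : L) :
    ⁅a, ⁅a, ⁅b, x⁆⁆⁆ + ⁅b, ⁅a, ⁅a, x⁆⁆⁆ = 2 • ⁅a, ⁅b, ⁅a, x⁆⁆⁆ := by
  have key : ⁅⁅a, ⁅a, b⁆⁆, x⁆ = 0 := by rw [hab, zero_lie]
  simp only [lie_lie, lie_sub] at key
  rw [two_nsmul, ← sub_eq_zero, ← key]
  abel

end LieIdentities

section SerreSystems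

variable {ι L : Type*} [LieRing L] {A : Matrix ι ι ℤ} {h e f : ι → L} {i j : ι}

/-- Elements `h i`, `e i`, `f i` of a Lie algebra satisfying the Weyl relations of the Cartan
matrix `A`, that is, all the defining relations of its Lie algebra other than the Serre
relations. -/
structure IsWeylSystem (A : Matrix ι ι ℤ) (h e f : ι → L) : Prop where
  lie_h_h : ∀ i j, ⁅h i, h j⁆ = 0
  lie_e_f_same : ∀ i, ⁅e i, f i⁆ = h i
  lie_e_f_ne : ∀ i j, i ≠ j → ⁅e i, f j⁆ = 0
  lie_h_e : ∀ i j, ⁅h i, e j⁆ = A i j • e j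
  lie_h_f : ∀ i j, ⁅h i, f j⁆ = -(A i j • f j)

variable (R : Type*) [CommRing R] [LieAlgebra R L]

/-- Elements `h i`, `e i`, `f i` of a Lie algebra satisfying all the relations which define the
Lie algebra of the Cartan matrix `A`. The Serre relations are written as in
`CartanMatrix.Relations`. -/
structure IsSerreSystem (A : Matrix ι ι ℤ) (h e f : ι → L) : Prop extends
    IsWeylSystem A h e f where
  ad_e_pow : ∀ i j, (LieAlgebra.ad R L (e i) ^ (-A i j).toNat) ⁅e i, e j⁆ = 0
  ad_f_pow : ∀ i j, (LieAlgebra.ad R L (f i) ^ (-A i j).toNat) ⁅f i, f j⁆ = 0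

variable {R}

/-- The Chevalley involution. -/
theorem IsWeylSystem.swap (hW : IsWeylSystem A h e f) : IsWeylSystem A (-h) f e where
  lie_h_h i j := by simp [hW.lie_h_h]
  lie_e_f_same i := by rw [← lie_skew, hW.lie_e_f_same, Pi.neg_apply]
  lie_e_f_ne i j hij := by rw [← lie_skew, hW.lie_e_f_ne j i hij.symm, neg_zero]
  lie_h_e i j := by rw [Pi.neg_apply, neg_lie, hW.lie_h_f, neg_neg]
  lie_h_f i j := by rw [Pi.neg_apply, neg_lie, hW.lie_h_e]

theorem IsSerreSystem.swap (hS : IsSerreSystem R A h e f) : IsSerreSystem R A (-h) f e where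
  toIsWeylSystem := hS.toIsWeylSystem.swap
  ad_e_pow := hS.ad_f_pow
  ad_f_pow := hS.ad_e_pow

namespace IsSerreSystem

theorem lie_e_e (hS : IsSerreSystem R A h e f) (hij : A i j = 0) : ⁅e i, e j⁆ = 0 := by
  simpa [hij] using hS.ad_e_pow i j

theorem lie_e_e_e (hS : IsSerreSystem R A h e f) (hij : A i j = -1) :
    ⁅e i, ⁅e i, e j⁆⁆ = 0 := by
  simpa [hij] using hS.ad_e_pow i j

end IsSerreSystem

namespace IsWeylSystem

theorem isSl2Triple [IsAddTorsionFree L] (hW : IsWeylSystem A h e f) (hii : A i i = 2)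
    (hi : e i ≠ 0) : IsSl2Triple (h i) (e i) (f i) where
  h_ne_zero h0 := by
    have h2 := hW.lie_h_e i i
    rw [h0, zero_lie, hii, eq_comm, ofNat_zsmul] at h2
    exact hi ((nsmul_eq_zero_iff_right two_ne_zero).1 h2)
  lie_e_f := hW.lie_e_f_same i
  lie_h_e_nsmul := by rw [hW.lie_h_e, hii, ofNat_zsmul]
  lie_h_f_nsmul := by rw [hW.lie_h_f, hii, ofNat_zsmul]

variable (K : Type*) [Field K] [CharZero K] [LieAlgebra K L] [Module.Finite K L]

/-- Under `ad`, the vector `e j` is a lowest weight vector of weight `A i j` for the `i`-th copy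
of `sl₂`, so that in finite dimension the Serre relation follows from `sl₂`-theory. -/
theorem ad_e_pow (hW : IsWeylSystem A h e f) (hA : ∀ i, A i i = 2) (i j : ι) :
    (LieAlgebra.ad K L (e i) ^ (-A i j).toNat) ⁅e i, e j⁆ = 0 := by
  have : IsAddTorsionFree L := .of_isTorsionFree K L
  by_cases hi : e i = 0
  · simp [hi]
  by_cases hj : e j = 0
  · simp [hj]
  by_cases hij : i = j
  · simp [hij]
  have P : (hW.isSl2Triple (hA i) hi).symm.HasPrimitiveVectorWith (e j) (-A i j : K) :=
    { ne_zero := hj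
      lie_h := by rw [neg_lie, hW.lie_h_e, neg_smul, Int.cast_smul_eq_zsmul]
      lie_e := by rw [← lie_skew, hW.lie_e_f_ne j i (Ne.symm hij), neg_zero] }
  obtain ⟨n, hn⟩ := P.exists_nat
  have hn' : (-A i j).toNat = n := by
    rw [show -A i j = n by exact_mod_cast hn, Int.toNat_natCast]
  have hpow : (LieAlgebra.ad K L (e i) ^ (n + 1)) (e j) = 0 := P.pow_toEnd_f_eq_zero_of_eq_nat hn
  rwa [pow_succ, Module.End.mul_apply, ← hn'] at hpow

theorem isSerreSystem (hW : IsWeylSystem A h e f) (hA : ∀ i, A i i = 2) :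
    IsSerreSystem K A h e f where
  toIsWeylSystem := hW
  ad_e_pow := hW.ad_e_pow K hA
  ad_f_pow := hW.swap.ad_e_pow K hA

end IsWeylSystem

end SerreSystems

section ToLieAlgebra

open CartanMatrix

variable (R : Type*) {B : Type*} [CommRing R] [DecidableEq B] (A : Matrix B B ℤ)

namespace ChevalleyGenerator

/-- The projection from the free Lie algebra onto the Lie algebra of a Cartan matrix. -/
noncomputable def proj : FreeLieAlgebra R (Generators B) →ₗ⁅R⁆ A.ToLieAlgebra R where
  toFun x := (LieSubmodule.Quotient.mk x :
    FreeLieAlgebra R (Generators B) ⧸ Relations.toIdeal R A)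
  map_add' _ _ := rfl
  map_smul' _ _ := rfl
  map_lie' := rfl

theorem proj_surjective : Function.Surjective (proj R A) :=
  LieSubmodule.Quotient.surjective_mk' (Relations.toIdeal R A)

theorem proj_eq_zero_iff {x : FreeLieAlgebra R (Generators B)} :
    proj R A x = 0 ↔ x ∈ Relations.toIdeal R A :=
  LieSubmodule.Quotient.mk_eq_zero' (N := Relations.toIdeal R A)

theorem proj_eq_zero {x : FreeLieAlgebra R (Generators B)} (hx : x ∈ Relations.toSet R A) :
    proj R A x = 0 :=
  (proj_eq_zero_iff R A).2 (LieSubmodule.subset_lieSpan hx)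

/-- The Cartan generators of the Lie algebra of a Cartan matrix. -/
noncomputable def H (i : B) : A.ToLieAlgebra R := proj R A (FreeLieAlgebra.of R (.H i))

/-- The positive Chevalley generators of the Lie algebra of a Cartan matrix. -/
noncomputable def E (i : B) : A.ToLieAlgebra R := proj R A (FreeLieAlgebra.of R (.E i))

/-- The negative Chevalley generators of the Lie algebra of a Cartan matrix. -/
noncomputable def F (i : B) : A.ToLieAlgebra R := proj R A (FreeLieAlgebra.of R (.F i))

theorem isWeylSystem : IsWeylSystem A (H R A) (E R A) (F R A) where
  lie_h_h i j := by
    simpa [H, Relations.HH] using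
      proj_eq_zero R A (x := Relations.HH R (i, j)) (by simp [Relations.toSet])
  lie_e_f_same i := by
    simpa [H, E, F, Relations.EF, sub_eq_zero] using
      proj_eq_zero R A (x := Relations.EF R (i, i)) (by simp [Relations.toSet])
  lie_e_f_ne i j hij := by
    simpa [E, F, Relations.EF, hij] using
      proj_eq_zero R A (x := Relations.EF R (i, j)) (by simp [Relations.toSet])
  lie_h_e i j := by
    simpa [H, E, Relations.HE, sub_eq_zero] using
      proj_eq_zero R A (x := Relations.HE R A (i, j)) (by simp [Relations.toSet])
  lie_h_f i j := by
    simpa [H, F, Relations.HF, add_eq_zero_iff_eq_neg] using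
      proj_eq_zero R A (x := Relations.HF R A (i, j)) (by simp [Relations.toSet])

theorem isSerreSystem : IsSerreSystem R A (H R A) (E R A) (F R A) where
  toIsWeylSystem := isWeylSystem R A
  ad_e_pow i j := by
    have := proj_eq_zero R A (x := Relations.adE R A (i, j)) (by simp [Relations.toSet])
    simpa [E, Relations.adE, lieHom_ad_pow_apply] using this
  ad_f_pow i j := by
    have := proj_eq_zero R A (x := Relations.adF R A (i, j)) (by simp [Relations.toSet])
    simpa [F, Relations.adF, lieHom_ad_pow_apply] using this

theorem lieSpan_E_union_F :
    LieSubalgebra.lieSpan R (A.ToLieAlgebra R) (Set.range (E R A) ∪ Set.range (F R A)) = ⊤ := by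
  set N := LieSubalgebra.lieSpan R (A.ToLieAlgebra R) (Set.range (E R A) ∪ Set.range (F R A))
  have hE (i : B) : E R A i ∈ N := LieSubalgebra.subset_lieSpan (.inl ⟨i, rfl⟩)
  have hF (i : B) : F R A i ∈ N := LieSubalgebra.subset_lieSpan (.inr ⟨i, rfl⟩)
  have hN : ∀ g : Generators B, proj R A (FreeLieAlgebra.of R g) ∈ N
    | .H i => by
      have := N.lie_mem (hE i) (hF i)
      rwa [(isWeylSystem R A).lie_e_f_same] at this
    | .E i => hE i
    | .F i => hF i
  let φ : FreeLieAlgebra R (Generators B) →ₗ⁅R⁆ N := FreeLieAlgebra.lift R fun g ↦ ⟨_, hN g⟩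
  have hφ : N.incl.comp φ = proj R A := by
    ext g
    simp [φ]
  refine eq_top_iff.2 fun z _ ↦ ?_
  obtain ⟨x, rfl⟩ := proj_surjective R A z
  rw [← hφ]
  exact (φ x).2

variable {R A} {L : Type*} [LieRing L] [LieAlgebra R L] {h e f : B → L}

/-- The homomorphism on the free Lie algebra extending `h`, `e`, `f`. -/
noncomputable def lift (h e f : B → L) : FreeLieAlgebra R (Generators B) →ₗ⁅R⁆ L :=
  FreeLieAlgebra.lift R fun | .H i => h i | .E i => e i | .F i => f i

theorem toIdeal_le_ker_lift (hS : IsSerreSystem R A h e f) :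
    Relations.toIdeal R A ≤ (lift (R := R) h e f).ker := by
  refine LieSubmodule.lieSpan_le.2 ?_
  rintro _ (((((⟨⟨i, j⟩, rfl⟩ | ⟨⟨i, j⟩, rfl⟩) | ⟨⟨i, j⟩, rfl⟩) | ⟨⟨i, j⟩, rfl⟩) |
    ⟨⟨i, j⟩, rfl⟩) | ⟨⟨i, j⟩, rfl⟩) <;> rw [SetLike.mem_coe, LieHom.mem_ker]
  · simp [lift, Relations.HH, hS.lie_h_h]
  · by_cases hij : i = j
    · simp [lift, Relations.EF, hij, hS.lie_e_f_same]
    · simp [lift, Relations.EF, hij, hS.lie_e_f_ne i j hij]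
  · simp [lift, Relations.HE, hS.lie_h_e]
  · simp [lift, Relations.HF, hS.lie_h_f]
  · simpa [lift, Relations.adE, lieHom_ad_pow_apply] using hS.ad_e_pow i j
  · simpa [lift, Relations.adF, lieHom_ad_pow_apply] using hS.ad_f_pow i j

theorem E_ne_zero (hS : IsSerreSystem R A h e f) {i : B} (hi : e i ≠ 0) : E R A i ≠ 0 :=
  fun h0 ↦ hi <| by
    simpa [lift] using LieHom.mem_ker.1 (toIdeal_le_ker_lift hS ((proj_eq_zero_iff R A).1 h0))

end ChevalleyGenerator

end ToLieAlgebra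

section RootVectors

variable {ι L : Type*} [Fintype ι] [DecidableEq ι] [LieRing L]

/-- `IsRootVector A e β x` says that `x` is an iterated bracket `⁅e i₁, ⁅e i₂, … e iₙ⁆⁆` of weight
`β`, obtained from a simple root by adding one simple root at a time, each time along a root string
of length one. -/
inductive IsRootVector (A : Matrix ι ι ℤ) (e : ι → L) : (ι → ℤ) → L → Prop
  | simple (i : ι) : IsRootVector A e (Pi.single i 1) (e i)
  | step (i : ι) (β : ι → ℤ) (x : L) (hx : IsRootVector A e β x) (hi : (A *ᵥ β) i = -1) :
      IsRootVector A e (β + Pi.single i 1) ⁅e i, x⁆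

/-- The root vectors of weight `β` are proportional to each other, and they are annihilated by
`e j` whenever adding the `j`-th simple root to `β` leaves the set of roots. -/
structure HasRigidRootVectors (R : Type*) [CommRing R] [LieAlgebra R L] (A : Matrix ι ι ℤ)
    (e : ι → L) (β : ι → ℤ) : Prop where
  span_eq : ∀ x y, IsRootVector A e β x → IsRootVector A e β y →
    Submodule.span R {x} = Submodule.span R {y}
  lie_eq_zero : ∀ x j, IsRootVector A e β x → 0 ≤ (A *ᵥ β) j → ⁅e j, x⁆ = 0

variable {R : Type*} [CommRing R] [LieAlgebra R L] {A : Matrix ι ι ℤ} {h e f : ι → L}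
  {β : ι → ℤ} {x y : L} {i j : ι}

namespace IsRootVector

theorem mem_posRoots (hA : IsADE A) (hx : IsRootVector A e β x) : β ∈ posRoots A := by
  induction hx with
  | simple i => exact hA.single_mem_posRoots i
  | step i β _ _ hi ih => exact hA.add_single_mem_posRoots ih hi

theorem exists_of_mem_posRoots (hA : IsADE A) (e : ι → L) (hβ : β ∈ posRoots A) :
    ∃ x, IsRootVector A e β x :=
  hA.posRoots_induction (P := fun β ↦ ∃ x, IsRootVector A e β x) (fun i ↦ ⟨_, .simple i⟩)
    (fun β _ i hi ⟨x, hx⟩ ↦ ⟨_, .step i β x hx hi⟩) hβ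

theorem eq_of_single (hA : IsADE A) (hx : IsRootVector A e (Pi.single i 1) x) : x = e i := by
  generalize hβ : (Pi.single i 1 : ι → ℤ) = β at hx
  cases hx with
  | simple j =>
    rw [show i = j by simpa [Pi.single_apply, eq_comm] using congrFun hβ i]
  | step j γ y hy hj =>
    have hpos := sum_pos_of_mem_posRoots (hy.mem_posRoots hA)
    have hsum := sum_add_single γ j
    rw [← hβ, Fintype.sum_pi_single'] at hsum
    omega

theorem lie_h (hW : IsWeylSystem A h e f) (hx : IsRootVector A e β x) (j : ι) :
    ⁅h j, x⁆ = (A *ᵥ β) j • x := by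
  induction hx with
  | simple i => simpa using hW.lie_h_e j i
  | step i γ u hu hi ih =>
    rw [leibniz_lie, hW.lie_h_e, ih, mulVec_add_single, smul_lie, lie_smul, ← add_smul, add_comm]

end IsRootVector

theorem span_lie_eq (hxy : Submodule.span R {x} = Submodule.span R {y}) (z : L) :
    Submodule.span R {⁅z, x⁆} = Submodule.span R {⁅z, y⁆} := by
  simpa [Submodule.map_span] using congrArg (Submodule.map (LieAlgebra.ad R L z)) hxy

theorem lie_eq_zero_of_span_eq (hxy : Submodule.span R {x} = Submodule.span R {y}) {z : L}
    (hz : ⁅z, x⁆ = 0) : ⁅z, y⁆ = 0 := by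
  simpa [hz, eq_comm (a := ⊥)] using span_lie_eq hxy z

namespace HasRigidRootVectors

theorem span_eq_of_forall_lt (hA : IsADE A) (hS : IsSerreSystem R A h e f)
    (ih : ∀ γ ∈ posRoots A, ∑ i, γ i < ∑ i, β i → HasRigidRootVectors R A e γ)
    (hx : IsRootVector A e β x) (hy : IsRootVector A e β y) :
    Submodule.span R {x} = Submodule.span R {y} := by
  cases hx with
  | simple i => rw [hy.eq_of_single hA]
  | step i γ u hu hi =>
  generalize hβ : γ + Pi.single i 1 = β at hy
  cases hy with
  | simple k =>
    have hx := hu.step i γ u hi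
    rw [hβ] at hx
    rw [hx.eq_of_single hA]
  | step k γ' u' hu' hk =>
  have hγ := hu.mem_posRoots hA
  have hγ' := hu'.mem_posRoots hA
  have ih' (δ) (hδ : δ ∈ posRoots A) (hδγ : ∑ j, δ j = ∑ j, γ j) :=
    (ih δ hδ (by rw [sum_add_single, hδγ]; omega)).span_eq
  by_cases hik : i = k
  · subst hik
    obtain rfl := add_right_cancel hβ
    exact span_lie_eq (ih' γ hγ rfl u u' hu hu') _
  rcases hA.eq_of_add_single_eq hγ hγ' hik hi hk hβ with
    ⟨hAik, δ, hδ, hδi, hδk, rfl, rfl⟩ | ⟨rfl, rfl⟩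
  · obtain ⟨v, hv⟩ := IsRootVector.exists_of_mem_posRoots hA e hδ
    rw [span_lie_eq (ih' _ hγ rfl _ _ hu (hv.step k δ v hδk)),
      span_lie_eq (ih' _ hγ' (by simp only [sum_add_single]) _ _ hu' (hv.step i δ v hδi)),
      lie_lie_comm_of_lie_eq_zero (hS.lie_e_e hAik)]
  · rw [hu.eq_of_single hA, hu'.eq_of_single hA, ← lie_skew, ← Set.neg_singleton,
      Submodule.span_neg]

theorem lie_lie_eq_zero_of_forall_lt (hA : IsADE A) (hS : IsSerreSystem R A h e f)
    (ih : ∀ γ ∈ posRoots A, ∑ i, γ i ≤ ∑ i, β i → HasRigidRootVectors R A e γ)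
    (hx : IsRootVector A e β x) (hj : (A *ᵥ β) j = -1) : ⁅e j, ⁅e j, x⁆⁆ = 0 := by
  cases hx with
  | simple i => exact hS.lie_e_e_e (by simpa using hj)
  | step i γ u hu hi =>
  have hγ := hu.mem_posRoots hA
  have hij : j ≠ i := by
    rintro rfl
    rw [mulVec_add_single, hA.diag] at hj
    omega
  rw [mulVec_add_single] at hj
  simp only [sum_add_single] at ih
  rcases hA.isSimplyLaced hij with hji | hji
  · have hγj : (A *ᵥ γ) j = -1 := by omega
    have hc := lie_lie_comm_of_lie_eq_zero (hS.lie_e_e hji)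
    rw [hc, hc, (ih _ (hA.add_single_mem_posRoots hγ hγj) (by rw [sum_add_single])).lie_eq_zero
      _ j (hu.step j γ u hγj) (by rw [mulVec_add_single, hA.diag]; omega), lie_zero]
  · have hz := (ih γ hγ (by omega)).lie_eq_zero u j hu (by omega)
    simpa [hz] using lie_lie_lie_of_lie_lie_eq_zero (hS.lie_e_e_e hji) u

variable [IsAddTorsionFree L]

theorem lie_eq_zero_of_mulVec_eq_zero (hA : IsADE A) (hS : IsSerreSystem R A h e f)
    (ih : ∀ γ ∈ posRoots A, ∑ i, γ i < ∑ i, β i → HasRigidRootVectors R A e γ)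
    (hx : IsRootVector A e β x) (hj : (A *ᵥ β) j = 0) : ⁅e j, x⁆ = 0 := by
  cases hx with
  | simple i => exact hS.lie_e_e (by simpa using hj)
  | step i γ u hu hi =>
  have hγ := hu.mem_posRoots hA
  have hij : j ≠ i := by
    rintro rfl
    rw [mulVec_add_single, hA.diag] at hj
    omega
  rw [mulVec_add_single] at hj
  simp only [sum_add_single] at ih
  rcases hA.isSimplyLaced hij with hji | hji
  · rw [lie_lie_comm_of_lie_eq_zero (hS.lie_e_e hji),
      (ih γ hγ (by omega)).lie_eq_zero u j hu (by omega), lie_zero]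
  · obtain ⟨δ, hδ, hδj, rfl⟩ := hA.exists_eq_add_single hγ (i := j) (by omega)
    obtain ⟨v, hv⟩ := IsRootVector.exists_of_mem_posRoots hA e hδ
    rw [mulVec_add_single, hA.apply_comm] at hi
    simp only [sum_add_single] at ih
    have hiv : ⁅e i, v⁆ = 0 := (ih δ hδ (by omega)).lie_eq_zero v i hv (by omega)
    have ihγ := ih _ hγ (by rw [sum_add_single]; omega)
    have hjjv : ⁅e j, ⁅e j, v⁆⁆ = 0 := ihγ.lie_eq_zero _ j (hv.step j δ v hδj) (by omega)
    have hz := lie_lie_lie_of_lie_lie_eq_zero (hS.lie_e_e_e hji) v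
    rw [hiv, hjjv, lie_zero, lie_zero, lie_zero, add_zero, eq_comm,
      nsmul_eq_zero_iff_right two_ne_zero] at hz
    exact lie_eq_zero_of_span_eq
      (span_lie_eq (ihγ.span_eq _ _ (hv.step j δ v hδj) hu) _) hz

theorem of_mem_posRoots (hA : IsADE A) (hS : IsSerreSystem R A h e f) (hβ : β ∈ posRoots A) :
    HasRigidRootVectors R A e β := by
  induction hn : (∑ i, β i).toNat using Nat.strong_induction_on generalizing β with
  | _ n ihn =>
  have ih (γ) (hγ : γ ∈ posRoots A) (hγβ : ∑ i, γ i < ∑ i, β i) : HasRigidRootVectors R A e γ :=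
    ihn _ (by have := sum_pos_of_mem_posRoots hγ; omega) hγ rfl
  have span_eq (x y : L) (hx : IsRootVector A e β x) (hy : IsRootVector A e β y) :=
    span_eq_of_forall_lt hA hS ih hx hy
  refine ⟨span_eq, fun x j hx hj ↦ ?_⟩
  obtain h0 | h1 | h2 : (A *ᵥ β) j = 0 ∨ (A *ᵥ β) j = 1 ∨ 2 ≤ (A *ᵥ β) j := by omega
  · exact lie_eq_zero_of_mulVec_eq_zero hA hS ih hx h0
  · obtain ⟨γ, hγ, hγj, rfl⟩ := hA.exists_eq_add_single hβ h1
    obtain ⟨u, hu⟩ := IsRootVector.exists_of_mem_posRoots hA e hγ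
    refine lie_eq_zero_of_span_eq (span_eq _ _ (hu.step j γ u hγj) hx) ?_
    refine lie_lie_eq_zero_of_forall_lt hA hS (fun δ hδ hle ↦ ih δ hδ ?_) hu hγj
    rw [sum_add_single]
    omega
  · obtain rfl := hβ.2.eq_single hA h2
    rw [hx.eq_of_single hA, lie_self]

end HasRigidRootVectors

end RootVectors

section Spanning

variable {ι R L : Type*} [CommRing R] [LieRing L] [LieAlgebra R L]

theorem eq_top_of_lieSpan_eq_top {S : Submodule R L} {s : Set L}
    (hs : LieSubalgebra.lieSpan R L s = ⊤) (hsS : s ⊆ S) (hS : ∀ x ∈ s, ∀ y ∈ S, ⁅x, y⁆ ∈ S) :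
    S = ⊤ := by
  have hlie {x : L} (hx : x ∈ LieSubalgebra.lieSpan R L s) : ∀ y ∈ S, ⁅x, y⁆ ∈ S := by
    induction hx using LieSubalgebra.lieSpan_induction with
    | mem x hx => exact hS x hx
    | zero => simp
    | add x y _ _ hx hy =>
      intro z hz
      rw [add_lie]
      exact add_mem (hx z hz) (hy z hz)
    | smul a x _ hx =>
      intro z hz
      rw [smul_lie]
      exact S.smul_mem a (hx z hz)
    | lie x y _ _ hx hy =>
      intro z hz
      rw [lie_lie]
      exact sub_mem (hx _ (hy z hz)) (hy _ (hx z hz))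
  refine eq_top_iff.2 fun x _ ↦ ?_
  have hx : x ∈ LieSubalgebra.lieSpan R L s := hs ▸ LieSubalgebra.mem_top x
  induction hx using LieSubalgebra.lieSpan_induction with
  | mem x hx => exact hsS hx
  | zero => exact zero_mem S
  | add _ _ _ _ hx hy => exact add_mem (hx trivial) (hy trivial)
  | smul a _ _ hx => exact S.smul_mem a (hx trivial)
  | lie x y hx _ _ hy => exact hlie hx y (hy trivial)

variable [Fintype ι] [DecidableEq ι]

variable (R) in
/-- The span of the Cartan elements `h` and of the root vectors built from `e`. -/
def borelSubmodule (A : Matrix ι ι ℤ) (h e : ι → L) : Submodule R L :=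
  Submodule.span R (Set.range h ∪ {x | ∃ β, IsRootVector A e β x})

variable {A : Matrix ι ι ℤ} {h e f : ι → L} {β : ι → ℤ} {x y : L}

theorem h_mem_borelSubmodule (i : ι) : h i ∈ borelSubmodule R A h e :=
  Submodule.subset_span (.inl ⟨i, rfl⟩)

theorem IsRootVector.mem_borelSubmodule (hx : IsRootVector A e β x) :
    x ∈ borelSubmodule R A h e :=
  Submodule.subset_span (.inr ⟨β, hx⟩)

namespace IsSerreSystem

variable [IsAddTorsionFree L]

theorem lie_e_mem_borelSubmodule (hA : IsADE A) (hS : IsSerreSystem R A h e f) (j : ι)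
    (hx : x ∈ borelSubmodule R A h e) : ⁅e j, x⁆ ∈ borelSubmodule R A h e := by
  suffices borelSubmodule R A h e ≤
      (borelSubmodule R A h e).comap (LieAlgebra.ad R L (e j)) from this hx
  refine Submodule.span_le.2 ?_
  rintro y (⟨i, rfl⟩ | ⟨β, hy⟩)
  · rw [SetLike.mem_coe, Submodule.mem_comap, LieAlgebra.ad_apply, ← lie_skew, hS.lie_h_e]
    exact neg_mem (zsmul_mem (IsRootVector.simple j).mem_borelSubmodule _)
  · rw [SetLike.mem_coe, Submodule.mem_comap, LieAlgebra.ad_apply]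
    have hβ := hy.mem_posRoots hA
    rcases (hA.neg_one_le_mulVec hβ j).eq_or_lt' with hj | hj
    · exact (hy.step j β y hj).mem_borelSubmodule
    · rw [(HasRigidRootVectors.of_mem_posRoots hA hS hβ).lie_eq_zero y j hy (by omega)]
      exact zero_mem _

theorem lie_f_mem_borelSubmodule (hA : IsADE A) (hS : IsSerreSystem R A h e f) (j : ι)
    (hx : IsRootVector A e β x) : ⁅f j, x⁆ ∈ borelSubmodule R A h e := by
  induction hx with
  | simple i =>
    rw [← lie_skew]
    by_cases hij : i = j
    · rw [hij, hS.lie_e_f_same]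
      exact neg_mem (h_mem_borelSubmodule j)
    · rw [hS.lie_e_f_ne i j hij, neg_zero]
      exact zero_mem _
  | step i γ u hu hi ih =>
    rw [leibniz_lie, ← lie_skew (f j)]
    refine add_mem ?_ (lie_e_mem_borelSubmodule hA hS i ih)
    by_cases hij : i = j
    · rw [hij, hS.lie_e_f_same, neg_lie, hu.lie_h hS.toIsWeylSystem]
      exact neg_mem (zsmul_mem hu.mem_borelSubmodule _)
    · rw [hS.lie_e_f_ne i j hij, neg_zero, zero_lie]
      exact zero_mem _

theorem lie_e_mem_borelSubmodule_sup (hA : IsADE A) (hS : IsSerreSystem R A h e f) (j : ι)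
    (hx : x ∈ borelSubmodule R A h e ⊔ borelSubmodule R A (-h) f) :
    ⁅e j, x⁆ ∈ borelSubmodule R A h e ⊔ borelSubmodule R A (-h) f := by
  suffices borelSubmodule R A h e ⊔ borelSubmodule R A (-h) f ≤
      (borelSubmodule R A h e ⊔ borelSubmodule R A (-h) f).comap (LieAlgebra.ad R L (e j)) from
    this hx
  refine sup_le (fun y hy ↦ Submodule.mem_sup_left (lie_e_mem_borelSubmodule hA hS j hy))
    (Submodule.span_le.2 ?_)
  rintro y (⟨i, rfl⟩ | ⟨β, hy⟩)
  · exact Submodule.mem_sup_left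
      (lie_e_mem_borelSubmodule hA hS j (neg_mem (h_mem_borelSubmodule i)))
  · exact Submodule.mem_sup_right (lie_f_mem_borelSubmodule hA hS.swap j hy)

theorem borelSubmodule_sup_eq_top (hA : IsADE A) (hS : IsSerreSystem R A h e f)
    (hgen : LieSubalgebra.lieSpan R L (Set.range e ∪ Set.range f) = ⊤) :
    borelSubmodule R A h e ⊔ borelSubmodule R A (-h) f = ⊤ := by
  refine eq_top_of_lieSpan_eq_top hgen (Set.union_subset ?_ ?_) ?_
  · rintro _ ⟨i, rfl⟩
    exact Submodule.mem_sup_left (IsRootVector.simple i).mem_borelSubmodule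
  · rintro _ ⟨i, rfl⟩
    exact Submodule.mem_sup_right (IsRootVector.simple i).mem_borelSubmodule
  · rintro _ (⟨i, rfl⟩ | ⟨i, rfl⟩) x hx
    · exact lie_e_mem_borelSubmodule_sup hA hS i hx
    · rw [sup_comm] at hx ⊢
      simpa using lie_e_mem_borelSubmodule_sup (x := x) hA hS.swap i (by simpa using hx)

theorem borelSubmodule_le_span (hA : IsADE A) (hS : IsSerreSystem R A h e f)
    {x : posRoots A → L} (hx : ∀ β : posRoots A, IsRootVector A e β (x β)) :
    borelSubmodule R A h e ≤ Submodule.span R (Set.range h ∪ Set.range x) := by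
  refine Submodule.span_le.2 (Set.union_subset (fun _ hz ↦ Submodule.subset_span (.inl hz)) ?_)
  rintro z ⟨β, hz⟩
  have hβ := hz.mem_posRoots hA
  have hzx := (HasRigidRootVectors.of_mem_posRoots hA hS hβ).span_eq z (x ⟨β, hβ⟩) hz (hx ⟨β, hβ⟩)
  refine Submodule.span_mono ?_ (hzx ▸ Submodule.mem_span_singleton_self z)
  rintro _ rfl
  exact .inr ⟨_, rfl⟩

theorem span_eq_top (hA : IsADE A) (hS : IsSerreSystem R A h e f)
    (hgen : LieSubalgebra.lieSpan R L (Set.range e ∪ Set.range f) = ⊤)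
    {x y : posRoots A → L} (hx : ∀ β : posRoots A, IsRootVector A e β (x β))
    (hy : ∀ β : posRoots A, IsRootVector A f β (y β)) :
    Submodule.span R (Set.range (Sum.elim h (Sum.elim x y))) = ⊤ := by
  rw [eq_top_iff, ← hS.borelSubmodule_sup_eq_top hA hgen, Set.Sum.elim_range, Set.Sum.elim_range]
  refine sup_le ((hS.borelSubmodule_le_span hA hx).trans (Submodule.span_mono ?_))
    ((hS.swap.borelSubmodule_le_span hA hy).trans (Submodule.span_le.2 ?_))
  · exact Set.union_subset_union_right _ Set.subset_union_left
  · rintro z (⟨i, rfl⟩ | hz)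
    · exact neg_mem (Submodule.subset_span (.inl ⟨i, rfl⟩))
    · exact Submodule.subset_span (.inr (.inr hz))

end IsSerreSystem

end Spanning

section Independence

variable {ι K L : Type*} [Field K] [LieRing L] [LieAlgebra K L]

theorem iSupIndep_iInf_maxGenEigenspace_ad {h : ι → L} (hh : ∀ i j, ⁅h i, h j⁆ = 0) :
    iSupIndep fun χ : ι → K ↦ ⨅ i, (LieAlgebra.ad K L (h i)).maxGenEigenspace (χ i) := by
  refine Module.End.independent_iInf_maxGenEigenspace_of_forall_mapsTo _ fun i j χ ↦
    Module.End.mapsTo_maxGenEigenspace_of_comm (commute_iff_lie_eq.2 ?_) χ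
  simp only [← LieHom.map_lie, hh, map_zero]

theorem linearIndependent_sumElim_of_lie_eq_smul {κ : Type*} {h : ι → L} {v : κ → L}
    {χ : κ → ι → K} (hh : ∀ i j, ⁅h i, h j⁆ = 0) (hind : LinearIndependent K h)
    (hv : ∀ k i, ⁅h i, v k⁆ = χ k i • v k) (hv0 : ∀ k, v k ≠ 0) (hχ : Function.Injective χ)
    (hχ0 : ∀ k, χ k ≠ 0) : LinearIndependent K (Sum.elim h v) := by
  set W := fun χ : ι → K ↦ ⨅ i, (LieAlgebra.ad K L (h i)).maxGenEigenspace (χ i)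
  have hW : iSupIndep W := iSupIndep_iInf_maxGenEigenspace_ad hh
  have mem_W {x : L} {ψ : ι → K} (hx : ∀ i, ⁅h i, x⁆ = ψ i • x) : x ∈ W ψ :=
    (Submodule.mem_iInf _).2 fun i ↦ Module.End.genEigenspace_le_maximal _ _ 1
      (Module.End.mem_genEigenspace_one.2 (hx i))
  refine hind.sum_type ((hW.comp hχ).linearIndependent _ (fun k ↦ mem_W (hv k)) hv0)
    ((hW 0).mono (Submodule.span_le.2 ?_) (Submodule.span_le.2 ?_))
  · rintro _ ⟨j, rfl⟩
    exact mem_W fun i ↦ by simp [hh]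
  · rintro _ ⟨k, rfl⟩
    exact Submodule.mem_iSup_of_mem (χ k) (Submodule.mem_iSup_of_mem (hχ0 k) (mem_W (hv k)))

variable [CharZero K] [Fintype ι] [DecidableEq ι] {A : Matrix ι ι ℤ} {h e f : ι → L}
  {β : ι → ℤ} {x : L}

theorem IsWeylSystem.linearIndependent_h (hW : IsWeylSystem A h e f) (hA : A.det ≠ 0)
    (he : ∀ i, e i ≠ 0) : LinearIndependent K h := by
  refine Fintype.linearIndependent_iff.2 fun g hg ↦ congrFun
    (eq_zero_of_vecMul_eq_zero (M := A.map (Int.castRingHom K)) ?_ (funext fun j ↦ ?_))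
  · rw [← RingHom.mapMatrix_apply, ← RingHom.map_det]
    exact Int.cast_ne_zero.2 hA
  · have hj : ⁅∑ i, g i • h i, e j⁆ = 0 := by rw [hg, zero_lie]
    simp only [sum_lie, smul_lie, hW.lie_h_e, ← Int.cast_smul_eq_zsmul K, smul_smul,
      ← Finset.sum_smul] at hj
    simpa [vecMul, dotProduct] using (smul_eq_zero.1 hj).resolve_right (he j)

variable (K) in
theorem IsRootVector.ne_zero [Module.Finite K L] (hA : IsADE A) (hW : IsWeylSystem A h e f)
    (he : ∀ i, e i ≠ 0) (hx : IsRootVector A e β x) : x ≠ 0 := by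
  have : IsAddTorsionFree L := .of_isTorsionFree K L
  induction hx with
  | simple i => exact he i
  | step i γ u hu hi ih =>
    intro h0
    have hu' : (hW.isSl2Triple (hA.diag i) (he i)).HasPrimitiveVectorWith u (-1 : K) :=
      ⟨ih, by rw [hu.lie_h hW, hi]; simp, h0⟩
    obtain ⟨n, hn⟩ := hu'.exists_nat
    exact Nat.cast_add_one_ne_zero n (by rw [← hn, neg_add_cancel] : (n + 1 : K) = 0)

namespace IsSerreSystem

theorem linearIndependent [Module.Finite K L] (hA : IsADE A) (hS : IsSerreSystem K A h e f)
    (he : ∀ i, e i ≠ 0) {x y : posRoots A → L} (hx : ∀ β : posRoots A, IsRootVector A e β (x β))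
    (hy : ∀ β : posRoots A, IsRootVector A f β (y β)) :
    LinearIndependent K (Sum.elim h (Sum.elim x y)) := by
  have : IsAddTorsionFree L := .of_isTorsionFree K L
  have hf (i : ι) : f i ≠ 0 := (hS.isSl2Triple (hA.diag i) (he i)).f_ne_zero
  let w : posRoots A ⊕ posRoots A → ι → ℤ := Sum.elim (fun β ↦ A *ᵥ β) fun β ↦ -(A *ᵥ β)
  have hw0 (k) : w k ≠ 0 := by
    have hAβ (β : posRoots A) : A *ᵥ (β : ι → ℤ) ≠ 0 := fun h0 ↦
      β.2.2.ne_zero (hA.mulVec_injective (h0.trans (mulVec_zero A).symm))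
    rcases k with β | β
    · exact hAβ β
    · exact neg_ne_zero.2 (hAβ β)
  have hcast : Function.Injective (fun (v : ι → ℤ) i ↦ (v i : K)) := Int.cast_injective.comp_left
  refine linearIndependent_sumElim_of_lie_eq_smul hS.lie_h_h
    (hS.linearIndependent_h hA.det_ne_zero he) (χ := fun k i ↦ w k i) ?_ ?_
    (hcast.comp hA.injective_mulVec_sumElim) fun k h0 ↦ hw0 k (hcast (h0.trans ?_))
  · rintro (β | β) i
    · exact ((hx β).lie_h hS.toIsWeylSystem i).trans (Int.cast_smul_eq_zsmul K _ _).symm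
    · have := (hy β).lie_h hS.swap.toIsWeylSystem i
      rw [Pi.neg_apply, neg_lie, neg_eq_iff_eq_neg, ← neg_smul] at this
      exact this.trans (Int.cast_smul_eq_zsmul K (-(A *ᵥ β) i) (y β)).symm
  · rintro (β | β)
    · exact (hx β).ne_zero K hA hS.toIsWeylSystem he
    · exact (hy β).ne_zero K hA hS.swap.toIsWeylSystem hf
  · ext i
    simp

omit [DecidableEq ι] in
theorem finrank_eq (hA : IsADE A) (hS : IsSerreSystem K A h e f)
    (hgen : LieSubalgebra.lieSpan K L (Set.range e ∪ Set.range f) = ⊤) (he : ∀ i, e i ≠ 0) :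
    Module.finrank K L = Fintype.card ι + 2 * (posRoots A).ncard := by
  classical
  have : IsAddTorsionFree L := .of_isTorsionFree K L
  have : Finite (posRoots A) := hA.finite_posRoots
  choose x hx using fun β : posRoots A ↦ IsRootVector.exists_of_mem_posRoots hA e β.2
  choose y hy using fun β : posRoots A ↦ IsRootVector.exists_of_mem_posRoots hA f β.2
  have hspan := hS.span_eq_top hA hgen hx hy
  have : Module.Finite K L := ⟨hspan ▸ Submodule.fg_span (Set.finite_range _)⟩
  rw [Module.finrank_eq_nat_card_basis (.mk (hS.linearIndependent hA he hx hy) hspan.ge),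
    Nat.card_sum, Nat.card_sum, Nat.card_eq_fintype_card, Nat.card_coe_set_eq, two_mul]

end IsSerreSystem

end Independence

section AdjointModule

variable {ι : Type*} [Fintype ι]

variable (R : Type*) (A : Matrix ι ι ℤ) in
/-- The underlying module of the adjoint representation, in Lusztig's form: it has a basis vector
for each simple root and a basis vector for each root, on which the Chevalley generators act with
structure constants that involve no signs. -/
abbrev AdjointModule [Semiring R] : Type _ := (ι ⊕ {β // IsRoot A β}) →₀ R

namespace AdjointModule

variable (R : Type*) [CommRing R] (A : Matrix ι ι ℤ)

/-- The basis vectors of weight zero. -/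
noncomputable def cartanVec (i : ι) : AdjointModule R A := Finsupp.single (.inl i) 1

open Classical in
/-- The basis vector of weight `β` if `β` is a root, and zero otherwise. -/
noncomputable def rootVec (β : ι → ℤ) : AdjointModule R A :=
  if hβ : IsRoot A β then Finsupp.single (.inr ⟨β, hβ⟩) 1 else 0

/-- The action of the `i`-th Cartan element. -/
noncomputable def H (i : ι) : Module.End R (AdjointModule R A) :=
  Finsupp.linearCombination R (Sum.elim 0 fun β ↦ (A *ᵥ β) i • rootVec R A β)

/-- The action of the root vector of the root `s • α i`, where `s = ±1` and `α i` is the `i`-th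
simple root. -/
noncomputable def X [DecidableEq ι] (s : ℤˣ) (i : ι) : Module.End R (AdjointModule R A) :=
  Finsupp.linearCombination R (Sum.elim (fun j ↦ |A i j| • rootVec R A (Pi.single i s)) fun β ↦
    if (β : ι → ℤ) = -Pi.single i (s : ℤ) then cartanVec R A i
    else rootVec R A ((β : ι → ℤ) + Pi.single i (s : ℤ)))

variable {R A} {β : ι → ℤ} {i j : ι} {s : ℤˣ}

theorem hom_ext {φ ψ : Module.End R (AdjointModule R A)}
    (hc : ∀ i, φ (cartanVec R A i) = ψ (cartanVec R A i))
    (hr : ∀ β, IsRoot A β → φ (rootVec R A β) = ψ (rootVec R A β)) : φ = ψ := by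
  refine Finsupp.lhom_ext' fun k ↦ LinearMap.ext_ring ?_
  rcases k with i | β
  · exact hc i
  · simpa [rootVec, β.2] using hr β β.2

theorem rootVec_of_not_isRoot (hβ : ¬IsRoot A β) : rootVec R A β = 0 := dif_neg hβ

@[simp] theorem H_cartanVec (i j : ι) : H R A i (cartanVec R A j) = 0 := by
  simp [H, cartanVec]

@[simp] theorem H_rootVec (i : ι) (β : ι → ℤ) :
    H R A i (rootVec R A β) = (A *ᵥ β) i • rootVec R A β := by
  by_cases hβ : IsRoot A β <;> simp [H, rootVec, hβ]

theorem lie_H_H (i j : ι) : ⁅H R A i, H R A j⁆ = 0 :=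
  hom_ext (by simp [Ring.lie_def]) (by simp [Ring.lie_def, smul_smul, mul_comm])

variable [DecidableEq ι]

@[simp] theorem X_cartanVec (s : ℤˣ) (i j : ι) :
    X R A s i (cartanVec R A j) = |A i j| • rootVec R A (Pi.single i (s : ℤ)) := by
  simp [X, cartanVec]

theorem X_rootVec (hβ : IsRoot A β) : X R A s i (rootVec R A β) =
    if β = -Pi.single i (s : ℤ) then cartanVec R A i
    else rootVec R A (β + Pi.single i (s : ℤ)) := by
  simp [X, rootVec, hβ]

theorem units_mul_mulVec_single (A : Matrix ι ι ℤ) (s : ℤˣ) (i j : ι) :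
    s * (A *ᵥ Pi.single i (s : ℤ)) j = A j i := by
  rw [mulVec_single, Pi.smul_apply, op_smul_eq_mul, col_apply, mul_left_comm,
    Int.units_coe_mul_self, mul_one]

theorem units_mul_mulVec_neg_single (hA : IsADE A) (s : ℤˣ) (i : ι) :
    s * (A *ᵥ -Pi.single i (s : ℤ)) i = -2 := by
  rw [mulVec_neg, Pi.neg_apply, mul_neg, units_mul_mulVec_single, hA.diag]

theorem units_mul_mulVec_add_neg_single (A : Matrix ι ι ℤ) (β : ι → ℤ) (s : ℤˣ) (i j : ι) :
    s * (A *ᵥ (β + Pi.single j ((-s : ℤˣ) : ℤ))) i = s * (A *ᵥ β) i - A i j := by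
  rw [Units.val_neg, Pi.single_neg, mulVec_add, Pi.add_apply, mulVec_neg, Pi.neg_apply, mul_add,
    mul_neg, units_mul_mulVec_single, sub_eq_add_neg]

theorem X_rootVec_neg_single (hA : IsADE A) (s : ℤˣ) (i : ι) :
    X R A s i (rootVec R A (-Pi.single i (s : ℤ))) = cartanVec R A i := by
  rw [X_rootVec (hA.isRoot_single s i).neg, if_pos rfl]

theorem X_rootVec_of_eq_neg_one (hA : IsADE A) (hβ : IsRoot A β)
    (hi : s * (A *ᵥ β) i = -1) :
    X R A s i (rootVec R A β) = rootVec R A (β + Pi.single i (s : ℤ)) := by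
  rw [X_rootVec hβ, if_neg]
  rintro rfl
  rw [units_mul_mulVec_neg_single hA] at hi
  omega

theorem X_rootVec_of_nonneg (hA : IsADE A) (hβ : IsRoot A β) (hi : 0 ≤ s * (A *ᵥ β) i) :
    X R A s i (rootVec R A β) = 0 := by
  rw [X_rootVec hβ, if_neg, rootVec_of_not_isRoot]
  · rw [hβ.add_single_iff hA]
    omega
  · rintro rfl
    rw [units_mul_mulVec_neg_single hA] at hi
    omega

theorem lie_H_X (hA : IsADE A) (s : ℤˣ) (i j : ι) :
    ⁅H R A i, X R A s j⁆ = (s * A i j) • X R A s j := by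
  refine hom_ext (fun k ↦ ?_) fun β hβ ↦ ?_
  · simp [Ring.lie_def, smul_comm |A j k|, mul_comm]
  · rw [Ring.lie_def, LinearMap.sub_apply, Module.End.mul_apply, Module.End.mul_apply,
      LinearMap.smul_apply, H_rootVec, map_zsmul]
    rcases lt_trichotomy (s * (A *ᵥ β) j) (-1) with hj | hj | hj
    · obtain rfl := hβ.eq_neg_single hA s (i := j) (by omega)
      simp [X_rootVec_neg_single hA, mulVec_neg, mul_comm]
    · simp [X_rootVec_of_eq_neg_one hA hβ hj, mulVec_add, add_smul, mul_comm]
    · simp [X_rootVec_of_nonneg hA hβ (i := j) (s := s) (by omega)]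

theorem X_neg_rootVec_single (hA : IsADE A) (s : ℤˣ) (i : ι) :
    X R A (-s) i (rootVec R A (Pi.single i (s : ℤ))) = cartanVec R A i := by
  have := X_rootVec_neg_single (R := R) hA (-s) i
  rwa [Units.val_neg, Pi.single_neg, neg_neg] at this

theorem X_X_neg_rootVec (hA : IsADE A) (hβ : IsRoot A β) (s : ℤˣ) (i : ι) :
    X R A s i (X R A (-s) i (rootVec R A β)) = max 0 (s * (A *ᵥ β) i) • rootVec R A β := by
  set p := s * (A *ᵥ β) i with hp
  have hneg : (-s : ℤˣ) * (A *ᵥ β) i = -p := by rw [Units.val_neg, neg_mul]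
  rcases lt_trichotomy p 1 with h0 | h1 | h2
  · rw [X_rootVec_of_nonneg hA hβ (by omega), map_zero, max_eq_left (by omega), zero_smul]
  · have h1' : (-s : ℤˣ) * (A *ᵥ β) i = -1 := by omega
    rw [X_rootVec_of_eq_neg_one hA hβ h1',
      X_rootVec_of_eq_neg_one hA ((hβ.add_single_iff hA _).2 h1'), h1]
    · simp [Pi.single_neg]
    · rw [units_mul_mulVec_add_neg_single, ← hp, h1, hA.diag]
      rfl
  · have hβs : β = Pi.single i (s : ℤ) := by
      simpa [Pi.single_neg] using hβ.eq_neg_single hA (-s) (i := i) (by omega)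
    rw [hp, hβs, X_neg_rootVec_single hA, X_cartanVec, units_mul_mulVec_single, hA.diag]
    rfl

theorem lie_X_X_neg_same (hA : IsADE A) (i : ι) : ⁅X R A 1 i, X R A (-1) i⁆ = H R A i := by
  refine hom_ext (fun k ↦ ?_) fun β hβ ↦ ?_
  · have h1 := X_rootVec_neg_single (R := R) hA 1 i
    have h2 := X_neg_rootVec_single (R := R) hA 1 i
    rw [← Pi.single_neg] at h1
    simp only [Ring.lie_def, LinearMap.sub_apply, Module.End.mul_apply, X_cartanVec, map_zsmul,
      Units.val_neg, h1, h2, sub_self, H_cartanVec]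
  · have h1 := X_X_neg_rootVec (R := R) hA hβ 1 i
    have h2 := X_X_neg_rootVec (R := R) hA hβ (-1) i
    rw [neg_neg] at h2
    rw [Ring.lie_def, LinearMap.sub_apply, Module.End.mul_apply, Module.End.mul_apply, h1, h2,
      ← sub_smul, H_rootVec, Units.val_neg, Units.val_one]
    congr 1
    omega

theorem X_X_neg_cartanVec (hA : IsADE A) (hij : i ≠ j) (s : ℤˣ) (k : ι) :
    X R A s i (X R A (-s) j (cartanVec R A k)) = 0 := by
  rw [X_cartanVec, map_zsmul, X_rootVec_of_nonneg hA (hA.isRoot_single _ _), smul_zero]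
  rw [Units.val_neg, Pi.single_neg, mulVec_neg, Pi.neg_apply, mul_neg, units_mul_mulVec_single]
  exact neg_nonneg.2 (hA.apply_nonpos hij)

theorem X_X_neg_rootVec_single (hA : IsADE A) (hij : i ≠ j) (s : ℤˣ) :
    X R A s i (X R A (-s) j (rootVec R A (Pi.single j (s : ℤ)))) =
      X R A (-s) j (X R A s i (rootVec R A (Pi.single j (s : ℤ)))) := by
  have hroot := hA.isRoot_single s j
  have hpair := units_mul_mulVec_single A s j i
  rw [X_neg_rootVec_single hA, X_cartanVec]
  rcases hA.isSimplyLaced hij with hAij | hAij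
  · rw [X_rootVec_of_nonneg hA hroot (by rw [hpair, hAij]), hAij]
    simp
  · have hsum := hpair.trans hAij
    rw [X_rootVec_of_eq_neg_one hA hroot hsum,
      X_rootVec_of_eq_neg_one hA ((hroot.add_single_iff hA s).2 hsum), hAij]
    · simp [Pi.single_neg]
    · rw [mulVec_add, Pi.add_apply, Units.val_neg, neg_mul, mul_add, units_mul_mulVec_single,
        units_mul_mulVec_single, hA.diag, hA.apply_comm, hAij]
      rfl

theorem X_X_neg_rootVec_eq_zero (hA : IsADE A) (hij : i ≠ j) (hβ : IsRoot A β)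
    (hi : 0 ≤ s * (A *ᵥ β) i) (hj : -1 ≤ (-s : ℤˣ) * (A *ᵥ β) j) :
    X R A s i (X R A (-s) j (rootVec R A β)) = 0 := by
  rcases hj.eq_or_lt' with h1 | h0
  · rw [X_rootVec_of_eq_neg_one hA hβ h1,
      X_rootVec_of_nonneg hA ((hβ.add_single_iff hA _).2 h1)]
    rw [units_mul_mulVec_add_neg_single]
    linarith [hA.apply_nonpos hij]
  · rw [X_rootVec_of_nonneg hA hβ (by omega), map_zero]

theorem X_X_neg_rootVec_of_eq_neg_one (hA : IsADE A) (hij : i ≠ j) (hβ : IsRoot A β)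
    (hi : s * (A *ᵥ β) i = -1) (hj : (-s : ℤˣ) * (A *ᵥ β) j = -1) :
    X R A s i (X R A (-s) j (rootVec R A β)) = X R A (-s) j (X R A s i (rootVec R A β)) := by
  have hβi := (hβ.add_single_iff hA s).2 hi
  have hβj := (hβ.add_single_iff hA (-s)).2 hj
  have hpair_i := units_mul_mulVec_add_neg_single A β s i j
  have hpair_j := units_mul_mulVec_add_neg_single A β (-s) j i
  rw [neg_neg, hj, hA.apply_comm] at hpair_j
  rw [hi] at hpair_i
  rw [X_rootVec_of_eq_neg_one hA hβ hi, X_rootVec_of_eq_neg_one hA hβ hj]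
  rcases hA.isSimplyLaced hij with hAij | hAij <;> rw [hAij] at hpair_i hpair_j
  · rw [X_rootVec_of_eq_neg_one hA hβj hpair_i, X_rootVec_of_eq_neg_one hA hβi hpair_j,
      add_right_comm]
  · rw [X_rootVec_of_nonneg hA hβj hpair_i.ge, X_rootVec_of_nonneg hA hβi hpair_j.ge]

theorem X_X_neg_rootVec_of_ne (hA : IsADE A) (hij : i ≠ j) (hβ : IsRoot A β) (s : ℤˣ) :
    X R A s i (X R A (-s) j (rootVec R A β)) = X R A (-s) j (X R A s i (rootVec R A β)) := by
  by_cases hj : (-s : ℤˣ) * (A *ᵥ β) j ≤ -2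
  · have hβs : β = Pi.single j (s : ℤ) := by
      simpa [Pi.single_neg] using hβ.eq_neg_single hA (-s) hj
    rw [hβs]
    exact X_X_neg_rootVec_single hA hij s
  by_cases hi : s * (A *ᵥ β) i ≤ -2
  · rw [hβ.eq_neg_single hA s hi, ← Pi.single_neg, ← Units.val_neg]
    simpa only [neg_neg] using (X_X_neg_rootVec_single (R := R) hA hij.symm (-s)).symm
  by_cases hi0 : 0 ≤ s * (A *ᵥ β) i
  · rw [X_X_neg_rootVec_eq_zero hA hij hβ hi0 (by omega), X_rootVec_of_nonneg hA hβ hi0, map_zero]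
  by_cases hj0 : 0 ≤ (-s : ℤˣ) * (A *ᵥ β) j
  · have h0 := X_X_neg_rootVec_eq_zero (R := R) (s := -s) hA hij.symm hβ hj0
      (by rw [neg_neg]; omega)
    rw [neg_neg] at h0
    rw [X_rootVec_of_nonneg hA hβ hj0, map_zero, h0]
  exact X_X_neg_rootVec_of_eq_neg_one hA hij hβ (by omega) (by omega)

theorem lie_X_X_neg_of_ne (hA : IsADE A) (hij : i ≠ j) : ⁅X R A 1 i, X R A (-1) j⁆ = 0 := by
  rw [Ring.lie_def, sub_eq_zero]
  refine hom_ext (fun k ↦ ?_) fun β hβ ↦ X_X_neg_rootVec_of_ne hA hij hβ 1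
  have hji := X_X_neg_cartanVec (R := R) hA hij.symm (-1) k
  rw [neg_neg] at hji
  rw [Module.End.mul_apply, Module.End.mul_apply, X_X_neg_cartanVec hA hij, hji]

theorem X_ne_zero [Nontrivial R] (hA : IsADE A) (s : ℤˣ) (i : ι) : X R A s i ≠ 0 := fun h0 ↦ by
  have := X_rootVec_neg_single (R := R) hA s i
  exact absurd this.symm (by simp [h0, cartanVec])

end AdjointModule

variable [DecidableEq ι] {A : Matrix ι ι ℤ}

attribute [local instance] LieRing.ofAssociativeRing

namespace AdjointModule

theorem isWeylSystem {R : Type*} [CommRing R] (hA : IsADE A) :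
    IsWeylSystem A (H R A) (X R A 1) (X R A (-1)) where
  lie_h_h := lie_H_H
  lie_e_f_same := lie_X_X_neg_same hA
  lie_e_f_ne _ _ := lie_X_X_neg_of_ne hA
  lie_h_e i j := (lie_H_X hA 1 i j).trans (by simp)
  lie_h_f i j := (lie_H_X hA (-1) i j).trans (LinearMap.ext fun x ↦ by
    rw [Units.val_neg, Units.val_one, neg_one_mul, LinearMap.smul_apply, LinearMap.neg_apply,
      LinearMap.smul_apply, neg_smul])

variable (K : Type*) [Field K] [CharZero K]

theorem isSerreSystem (hA : IsADE A) : IsSerreSystem K A (H K A) (X K A 1) (X K A (-1)) := by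
  have : Finite {β // IsRoot A β} := hA.finite_setOf_isRoot.to_subtype
  exact (isWeylSystem hA).isSerreSystem K hA.diag

end AdjointModule

omit [Fintype ι] in
theorem ChevalleyGenerator.E_ne_zero_of_isADE [Finite ι] (K : Type*) [Field K] [CharZero K]
    (hA : IsADE A) (i : ι) : E K A i ≠ 0 := by
  have := Fintype.ofFinite ι
  exact E_ne_zero (AdjointModule.isSerreSystem K hA) (AdjointModule.X_ne_zero hA 1 i)

end AdjointModule

section Dimension

theorem IsADE.finrank_toLieAlgebra {ι : Type*} [Fintype ι] [DecidableEq ι] {A : Matrix ι ι ℤ}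
    (hA : IsADE A) (K : Type*) [Field K] [CharZero K] :
    Module.finrank K (A.ToLieAlgebra K) = Fintype.card ι + 2 * (posRoots A).ncard :=
  (ChevalleyGenerator.isSerreSystem K A).finrank_eq hA (ChevalleyGenerator.lieSpan_E_union_F K A)
    (ChevalleyGenerator.E_ne_zero_of_isADE K hA)

end Dimension

section E₆

open CartanMatrix

/-- Squares are completed along the three branches of the Dynkin diagram, from their tips to the
trivalent node `3`. -/
theorem six_mul_dotProduct_E₆_mulVec (x : Fin 6 → ℤ) :
    6 * (x ⬝ᵥ E₆ *ᵥ x) = 3 * (2 * x 0 - x 2) ^ 2 + (3 * x 2 - 2 * x 3) ^ 2 +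
      3 * (2 * x 1 - x 3) ^ 2 + (3 * x 4 - 2 * x 3) ^ 2 + 3 * (2 * x 5 - x 4) ^ 2 + x 3 ^ 2 := by
  simp only [dotProduct, mulVec, E₆, of_apply, cons_val', cons_val_fin_one, Fin.sum_univ_succ,
    cons_val_zero, cons_val_succ, Fin.succ_zero_eq_one, Fin.succ_one_eq_two, Fin.reduceSucc,
    Finset.univ_unique, Fin.default_eq_zero, Finset.sum_singleton]
  ring

theorem isADE_E₆ : IsADE E₆ where
  diag := E₆_diag
  isSimplyLaced := isSimplyLaced_E₆
  posDef := by
    refine .of_dotProduct_mulVec_pos (isHermitian_iff_isSymm.2 E₆_isSymm) fun x hx ↦ ?_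
    rw [star_trivial]
    have hsq := six_mul_dotProduct_E₆_mulVec x
    by_contra! hle
    have h3 : x 3 = 0 := by nlinarith
    have h2 : x 2 = 0 := by nlinarith
    have h4 : x 4 = 0 := by nlinarith
    have h0 : x 0 = 0 := by nlinarith
    have h1 : x 1 = 0 := by nlinarith
    have h5 : x 5 = 0 := by nlinarith
    exact hx (by ext i; fin_cases i <;> assumption)

theorem adjugate_E₆_diag : E₆.adjugate.diag = ![4, 6, 10, 18, 10, 4] := by
  decide +kernel

/-- The upper bound is the highest root; it is the integral part of the Cauchy–Schwarz bound. -/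
theorem le_of_isRoot_E₆ {β : Fin 6 → ℤ} (hβ : IsRoot E₆ β) : β ≤ ![1, 2, 2, 3, 2, 1] := by
  intro i
  have hi := isADE_E₆.det_mul_apply_sq_le β i
  rw [hβ, E₆_det, ← diag_apply E₆.adjugate, adjugate_E₆_diag] at hi
  by_contra! hlt
  fin_cases i <;> simp only [Fin.zero_eta, Fin.mk_one, Fin.reduceFinMk, cons_val,
    Int.reduceMul] at hi hlt <;> nlinarith

theorem ncard_posRoots_E₆ : (posRoots E₆).ncard = 36 := by
  have hbox : posRoots E₆ =
      {β ∈ Finset.Icc (0 : Fin 6 → ℤ) ![1, 2, 2, 3, 2, 1] | β ⬝ᵥ E₆ *ᵥ β = 2} := by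
    ext β
    simp only [Finset.coe_filter, Finset.mem_Icc, Set.mem_ofPred_eq]
    exact ⟨fun hβ ↦ ⟨⟨hβ.1, le_of_isRoot_E₆ hβ.2⟩, hβ.2⟩, fun hβ ↦ ⟨hβ.1.1, hβ.2⟩⟩
  rw [hbox, Set.ncard_coe_finset]
  decide +kernel

theorem finrank_e6_general (K : Type*) [Field K] [CharZero K] :
    Module.finrank K (LieAlgebra.e₆ K) = 78 := by
  rw [isADE_E₆.finrank_toLieAlgebra, ncard_posRoots_E₆, Fintype.card_fin]

end E₆

/-- The exceptional Lie algebra `e₆(ℂ)` has dimension `78` over `ℂ`; equivalently, its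
adjoint representation is `78`-dimensional. -/
theorem finrank_e6 : Module.finrank ℂ (LieAlgebra.e₆ ℂ) = 78 :=
  finrank_e6_general ℂ
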